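/- Let λ be a regular cardinal and let (K,M) be a λ-continuous cellular category. Let I be a λ-directed poset and let D: I → K² be a diagram in the arrow category of K such that every object D i is a morphism f_i: A_i → B_i in M and every transition morphism D(i ≤ j) is a cellular square (all of whose four morphisms lie in M). Let f: A → B be the colimit of D in K². Then f belongs to M, and for every i ∈ I the colimit coprojection square from f_i to f is a cellular square; moreover, f together with these coprojections is the colimit of D in the category K_{M,↓} whose objects are the morphisms in M and whose morphisms are cellular squares. (The independence relation given by cellular squares is λ-continuous.) -/

import Mathlib

open CategoryTheory CategoryTheory.Limits

universe v u

namespace Paper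

/-- A preorder `I` is `κ`-directed if every subset of cardinality `< κ` has an upper bound. -/
def IsCardinalDirected (κ : Cardinal.{v}) (I : Type v) [Preorder I] : Prop :=
  ∀ S : Set I, Cardinal.mk S < κ → ∃ j : I, ∀ i ∈ S, i ≤ j

section Cellular

variable {K : Type u} [Category.{v} K]

/-- The canonical cocone, with apex `F.obj j`, over the restriction of a chain `F` to `Set.Iio j`. -/
@[simps]
def chainCocone {J : Type v} [Preorder J] (F : J ⥤ K) (j : J) :
    Cocone ((Monotone.functor (f := (Subtype.val : Set.Iio j → J)) fun _ _ h => h) ⋙ F) where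
  pt := F.obj j
  ι :=
    { app := fun i => F.map (homOfLE i.2.le)
      naturality := fun i i' h => by
        dsimp [Monotone.functor]
        rw [Category.comp_id, ← F.map_comp]
        rfl }

variable [HasColimits K]

/-- `M` is closed under transfinite compositions: for every smooth chain indexed by a
well-ordered set, all of whose successor maps lie in `M`, the canonical morphism from the
first object to the colimit lies in `M`. -/
def TransfiniteClosed (M : MorphismProperty K) : Prop :=
  ∀ (J : Type v) (_ : LinearOrder J) (_ : OrderBot J) (_ : SuccOrder J) (_ : WellFoundedLT J)
    (F : J ⥤ K),
    (∀ j : J, Order.IsSuccLimit j → Nonempty (IsColimit (chainCocone F j))) →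
    (∀ j : J, ¬IsMax j → M (F.map (homOfLE (Order.le_succ j)))) →
    ∀ c : Cocone F, IsColimit c → M (c.ι.app ⊥)

/-- A cellular category: a cocomplete category equipped with a class of morphisms containing
all isomorphisms and closed under pushouts and transfinite compositions. -/
class CellularCategory (K : Type u) [Category.{v} K] [HasColimits K]
    (M : MorphismProperty K) : Prop where
  iso_mem : ∀ {X Y : K} (f : X ⟶ Y), IsIso f → M f
  comp_mem : ∀ {X Y Z : K} (f : X ⟶ Y) (g : Y ⟶ Z), M f → M g → M (f ≫ g)
  pushout_mem : ∀ {A B A' P : K} (f : A ⟶ B) (g : A ⟶ A') (u : B ⟶ P) (v : A' ⟶ P),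
    IsPushout f g u v → M f → M v
  transfinite_mem : TransfiniteClosed M

/-- A commutative square `(f, g, u, v)` is cellular if the induced morphism from the pushout
of the span `(f, g)` to the lower right corner lies in `M`. -/
def IsCellularSquare (M : MorphismProperty K) {A B C D : K}
    (f : A ⟶ B) (g : A ⟶ C) (u : B ⟶ D) (v : C ⟶ D) : Prop :=
  ∃ w : f ≫ u = g ≫ v, M (pushout.desc u v w)

/-- A morphism of the arrow category is a cellular square (all four morphisms in `M` and
the induced morphism from the pushout in `M`). -/
def CellularHom (M : MorphismProperty K) : ∀ ⦃X Y : Arrow K⦄, (X ⟶ Y) → Prop :=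
  fun X Y sq => M sq.left ∧ M sq.right ∧ IsCellularSquare M sq.left X.hom Y.hom sq.right

/-- `(K, M)` is coherent. -/
def Coherent (M : MorphismProperty K) : Prop :=
  ∀ {X Y Z : K} (f : X ⟶ Y) (g : Y ⟶ Z), M (f ≫ g) → M g → M f


/-- `(K, M)` has effective unions: pullbacks of cospans in `M` exist with projections in `M`,
and every pullback square of morphisms of `M` is a cellular square. -/
def EffectiveUnions (M : MorphismProperty K) : Prop :=
  (∀ {B C D : K} (u : B ⟶ D) (v : C ⟶ D), M u → M v →
    ∃ (A : K) (f : A ⟶ B) (g : A ⟶ C), M f ∧ M g ∧ IsPullback f g u v) ∧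
  ∀ {A B C D : K} (f : A ⟶ B) (g : A ⟶ C) (u : B ⟶ D) (v : C ⟶ D),
    M f → M g → M u → M v → IsPullback f g u v → IsCellularSquare M f g u v

end Cellular

section Retract

variable {K : Type u} [Category.{v} K]

/-- `f` is a retract of `f'` in the arrow category. -/
def IsArrowRetract {A B A' B' : K} (f : A ⟶ B) (f' : A' ⟶ B') : Prop :=
  ∃ (iA : A ⟶ A') (iB : B ⟶ B') (rA : A' ⟶ A) (rB : B' ⟶ B),
    iA ≫ rA = 𝟙 A ∧ iB ≫ rB = 𝟙 B ∧ iA ≫ f' = f ≫ iB ∧ rA ≫ f = f' ≫ rB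

/-- `M` is closed under retracts in the arrow category. -/
def RetractClosed (M : MorphismProperty K) : Prop :=
  ∀ {A B A' B' : K} (f : A ⟶ B) (f' : A' ⟶ B'), IsArrowRetract f f' → M f' → M f

end Retract

section Sub

variable {C : Type u} [Category.{v} C]
variable (Obj : C → Prop) (Hom : ∀ ⦃X Y : C⦄, (X ⟶ Y) → Prop)

/-- `F` is a diagram lying in the (not necessarily full) subcategory determined by
the object predicate `Obj` and the morphism predicate `Hom`. -/
def SubDiagram {I : Type*} [Preorder I] (F : I ⥤ C) : Prop :=
  (∀ i, Obj (F.obj i)) ∧ ∀ (i j : I) (h : i ⟶ j), Hom (F.map h)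

/-- `c` is a colimit cocone for `F` in the subcategory determined by `Obj` and `Hom`:
its apex and legs lie in the subcategory, and it enjoys the universal property with
respect to all cocones lying in the subcategory. -/
def SubIsColimit {I : Type*} [Preorder I] {F : I ⥤ C} (c : Cocone F) : Prop :=
  Obj c.pt ∧ (∀ i, Hom (c.ι.app i)) ∧
    ∀ c' : Cocone F, Obj c'.pt → (∀ i, Hom (c'.ι.app i)) →
      ∃ m : c.pt ⟶ c'.pt, Hom m ∧ (∀ i, c.ι.app i ≫ m = c'.ι.app i) ∧
        ∀ m' : c.pt ⟶ c'.pt, Hom m' → (∀ i, c.ι.app i ≫ m' = c'.ι.app i) → m' = m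

/-- `X` is a `κ`-presentable object of the subcategory determined by `Obj` and `Hom`. -/
def SubPresentable (κ : Cardinal.{v}) (X : C) : Prop :=
  ∀ I : Preord.{v}, IsCardinalDirected κ I →
    ∀ F : I ⥤ C, SubDiagram Obj Hom F → ∀ c : Cocone F, SubIsColimit Obj Hom c →
      (∀ h : X ⟶ c.pt, Hom h → ∃ (i : I) (g : X ⟶ F.obj i), Hom g ∧ g ≫ c.ι.app i = h) ∧
      (∀ (i : I) (g g' : X ⟶ F.obj i), Hom g → Hom g' → g ≫ c.ι.app i = g' ≫ c.ι.app i →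
        ∃ (j : I) (hij : i ≤ j), g ≫ F.map hij.hom = g' ≫ F.map hij.hom)

/-- The subcategory determined by `Obj` and `Hom` has `κ`-directed colimits. -/
def SubHasDirectedColimits (κ : Cardinal.{v}) : Prop :=
  ∀ I : Preord.{v}, IsCardinalDirected κ I →
    ∀ F : I ⥤ C, SubDiagram Obj Hom F → ∃ c : Cocone F, SubIsColimit Obj Hom c

/-- The subcategory determined by `Obj` and `Hom` is a `κ`-accessible category:
it has `κ`-directed colimits and every object is a `κ`-directed colimit of
`κ`-presentable objects of the subcategory. -/
def SubAccessible (κ : Cardinal.{v}) : Prop :=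
  SubHasDirectedColimits Obj Hom κ ∧
    ∀ X : C, Obj X → ∃ (I : Preord.{v}) (F : I ⥤ C) (c : Cocone F),
      IsCardinalDirected κ I ∧ SubDiagram Obj Hom F ∧
      (∀ i, SubPresentable Obj Hom κ (F.obj i)) ∧ SubIsColimit Obj Hom c ∧ c.pt = X

/-- The subcategory determined by `Obj` and `Hom` is closed under `κ`-directed colimits in `C`. -/
def SubClosed (κ : Cardinal.{v}) : Prop :=
  ∀ I : Preord.{v}, IsCardinalDirected κ I →
    ∀ F : I ⥤ C, SubDiagram Obj Hom F →
      ∀ c : Cocone F, IsColimit c → SubIsColimit Obj Hom c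

end Sub

section Access

variable (K : Type u) [Category.{v} K]

/-- `K` is a `κ`-accessible category. -/
def AccessibleCat (κ : Cardinal.{v}) : Prop :=
  SubAccessible (fun _ : K => True) (fun _ _ _ => True) κ

/-- `A` is a `κ`-presentable object of `K`. -/
def PresentableObj (κ : Cardinal.{v}) (A : K) : Prop :=
  SubPresentable (fun _ : K => True) (fun _ _ _ => True) κ A

variable {K}
variable (M : MorphismProperty K)

/-- `(K, M)` is `κ`-continuous: the wide subcategory `K_M` is closed under `κ`-directed
colimits in `K`. -/
def MContinuous (κ : Cardinal.{v}) : Prop :=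
  SubClosed (fun _ : K => True) M κ

/-- `(K, M)` is a `κ`-accessible cellular category: it is `κ`-continuous and both `K` and the
wide subcategory `K_M` are `κ`-accessible. -/
def MAccessible (κ : Cardinal.{v}) : Prop :=
  MContinuous M κ ∧ AccessibleCat K κ ∧ SubAccessible (fun _ : K => True) M κ

/-- The morphisms of `M` with `κ`-presentable domain and codomain. -/
def MBetweenPresentable (κ : Cardinal.{v}) : MorphismProperty K :=
  fun A B f => M f ∧ PresentableObj K κ A ∧ PresentableObj K κ B

end Access

section Cof

variable {K : Type u} [Category.{v} K]

/-- The closure of a class of morphisms under pushouts, transfinite compositions and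
retracts. -/
inductive CofClosure (X : MorphismProperty K) : ∀ {A B : K}, (A ⟶ B) → Prop
  | of {A B : K} (f : A ⟶ B) : X f → CofClosure X f
  | pushout {A B A' P : K} (f : A ⟶ B) (g : A ⟶ A') (u : B ⟶ P) (v : A' ⟶ P) :
      IsPushout f g u v → CofClosure X f → CofClosure X v
  | retract {A B A' B' : K} (f : A ⟶ B) (f' : A' ⟶ B') :
      IsArrowRetract f f' → CofClosure X f' → CofClosure X f
  | transfinite (J : Type v) (_ : LinearOrder J) (_ : OrderBot J) (_ : SuccOrder J)
      (_ : WellFoundedLT J) (F : J ⥤ K) :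
      (∀ j : J, Order.IsSuccLimit j → Nonempty (IsColimit (chainCocone F j))) →
      (∀ j : J, ¬IsMax j → CofClosure X (F.map (homOfLE (Order.le_succ j)))) →
      ∀ c : Cocone F, IsColimit c → CofClosure X (c.ι.app ⊥)

/-- The morphism property generated by a family of morphisms. -/
inductive OfFamily {ι : Type v} {A B : ι → K} (x : ∀ i, A i ⟶ B i) : ∀ {X Y : K}, (X ⟶ Y) → Prop
  | mk (i : ι) : OfFamily x (x i)

variable [HasColimits K]

/-- `(K, M)` is cofibrantly generated: `M` is the closure of a set of morphisms under
pushouts, transfinite compositions and retracts. -/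
def CofibrantlyGenerated (M : MorphismProperty K) : Prop :=
  ∃ (ι : Type v) (A B : ι → K) (x : ∀ i, A i ⟶ B i),
    ∀ {X Y : K} (f : X ⟶ Y), M f ↔ CofClosure (fun _ _ g => OfFamily x g) f

end Cof

/-!
For a morphism `A ⟶ X` out of the colimit, the pushouts `X ⊔_{A i} B i` form a directed diagram
with colimit `X ⊔_A B`. Its transition morphisms are cobase changes of the corner morphisms
`A j ⊔_{A i} B i ⟶ B j`, hence lie in `M`, so continuity applies to it. For `X = A` the colimit is
`B`, its coprojections are the corner morphisms of the coprojection squares, and these lie in `M`.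
When `X` is the domain of the point `X ⟶ Y` of a cellular cocone, the corner morphisms
`X ⊔_{A i} B i ⟶ Y` lie in `M`, hence so does the morphism `X ⊔_A B ⟶ Y` they induce, which is
the corner morphism of the mediating square.
-/

section CobaseChange

variable {C J : Type*} [Category C] [Category J]

/-- Colimits commute with pushouts: if `P` is pointwise the pushout of `G ← F ⟶ H`, then a cocone
under `P` whose point is the pushout of the colimits of `G`, `F` and `H` is a colimit cocone. -/
noncomputable def isColimitOfIsPushout {F G H P : J ⥤ C} {f : F ⟶ G} {g : F ⟶ H} {u : G ⟶ P}
    {v : H ⟶ P} (sq : ∀ j, IsPushout (f.app j) (g.app j) (u.app j) (v.app j))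
    {cF : Cocone F} {cG : Cocone G} {cH : Cocone H} {cP : Cocone P}
    (hF : IsColimit cF) (hG : IsColimit cG) (hH : IsColimit cH)
    {f' : cF.pt ⟶ cG.pt} {g' : cF.pt ⟶ cH.pt} {u' : cG.pt ⟶ cP.pt} {v' : cH.pt ⟶ cP.pt}
    (sq' : IsPushout f' g' u' v')
    (hf : ∀ j, cF.ι.app j ≫ f' = f.app j ≫ cG.ι.app j)
    (hg : ∀ j, cF.ι.app j ≫ g' = g.app j ≫ cH.ι.app j)
    (hu : ∀ j, cG.ι.app j ≫ u' = u.app j ≫ cP.ι.app j)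
    (hv : ∀ j, cH.ι.app j ≫ v' = v.app j ≫ cP.ι.app j) : IsColimit cP := by
  have desc_condition (s : Cocone P) :
      f' ≫ hG.desc ((Cocone.precompose u).obj s) = g' ≫ hH.desc ((Cocone.precompose v).obj s) :=
    hF.hom_ext fun j => by
      rw [reassoc_of% hf j, reassoc_of% hg j, hG.fac, hH.fac]
      exact (sq j).w_assoc _
  refine
    { desc := fun s => sq'.desc _ _ (desc_condition s)
      fac := fun s j => (sq j).hom_ext ?_ ?_
      uniq := fun s m hm => sq'.hom_ext (hG.hom_ext fun j => ?_) (hH.hom_ext fun j => ?_) }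
  · rw [← reassoc_of% hu j, sq'.inl_desc, hG.fac]
    rfl
  · rw [← reassoc_of% hv j, sq'.inr_desc, hH.fac]
    rfl
  · rw [sq'.inl_desc, reassoc_of% hu j, hm, hG.fac]
    rfl
  · rw [sq'.inr_desc, reassoc_of% hv j, hm, hH.fac]
    rfl

variable [HasPushouts C] {F G : J ⥤ C} (φ : F ⟶ G) (a : Cocone F)

/-- The cobase change `j ↦ X ⊔_{F j} G j` of `φ` along a cocone `a` with point `X`. -/
noncomputable def cobaseChange : J ⥤ C :=
  pushout a.ι φ

namespace cobaseChange

/-- The natural coprojection `X ⟶ X ⊔_{F j} G j`. -/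
noncomputable def inl : (Functor.const J).obj a.pt ⟶ cobaseChange φ a :=
  pushout.inl a.ι φ

/-- The natural coprojection `G j ⟶ X ⊔_{F j} G j`. -/
noncomputable def inr : G ⟶ cobaseChange φ a :=
  pushout.inr a.ι φ

lemma isPushout : IsPushout a.ι φ (inl φ a) (inr φ a) :=
  IsPushout.of_hasPushout a.ι φ

lemma isPushout_app (j : J) :
    IsPushout (a.ι.app j) (φ.app j) ((inl φ a).app j) ((inr φ a).app j) :=
  (isPushout φ a).map ((evaluation J C).obj j)

lemma inl_app_map {i j : J} (h : i ⟶ j) :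
    (inl φ a).app i ≫ (cobaseChange φ a).map h = (inl φ a).app j :=
  ((inl φ a).naturality h).symm.trans (Category.id_comp _)

variable {φ a}

/-- The cocone under `j ↦ X ⊔_{F j} G j` induced by a cocone `b` under `G` and a compatible
morphism from `X` to the point of `b`. -/
noncomputable def cocone {b : Cocone G} {x : a.pt ⟶ b.pt}
    (w : ∀ j, a.ι.app j ≫ x = φ.app j ≫ b.ι.app j) : Cocone (cobaseChange φ a) where
  pt := b.pt
  ι := (isPushout φ a).desc ((Functor.const J).map x) b.ι (by ext j; exact w j)

variable {b : Cocone G} {x : a.pt ⟶ b.pt} (w : ∀ j, a.ι.app j ≫ x = φ.app j ≫ b.ι.app j)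

lemma inl_app_cocone_ι_app (j : J) : (inl φ a).app j ≫ (cocone w).ι.app j = x :=
  congr_app ((isPushout φ a).inl_desc _ _ _) j

lemma inr_app_cocone_ι_app (j : J) : (inr φ a).app j ≫ (cocone w).ι.app j = b.ι.app j :=
  congr_app ((isPushout φ a).inr_desc _ _ _) j

/-- If `A ⟶ B` is the morphism induced by `φ` on colimits, then `X ⊔_A B` is the colimit of
`j ↦ X ⊔_{F j} G j`. Connectedness makes `X` the colimit of the constant diagram at `X`. -/
noncomputable def isColimitCocone [IsConnected J] {cF : Cocone F} {cG : Cocone G}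
    (hF : IsColimit cF) (hG : IsColimit cG) {f : cF.pt ⟶ cG.pt} {s : cF.pt ⟶ a.pt}
    {y : cG.pt ⟶ b.pt} (sq : IsPushout s f x y)
    (hf : ∀ j, cF.ι.app j ≫ f = φ.app j ≫ cG.ι.app j)
    (hs : ∀ j, cF.ι.app j ≫ s = a.ι.app j) (hy : ∀ j, cG.ι.app j ≫ y = b.ι.app j) :
    IsColimit (cocone w) :=
  isColimitOfIsPushout (isPushout_app φ a) hF (isColimitConstCocone J a.pt) hG sq
    (fun j => (hs j).trans (Category.comp_id _).symm) hf
    (fun j => (Category.id_comp _).trans (inl_app_cocone_ι_app w j).symm)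
    (fun j => (hy j).trans (inr_app_cocone_ι_app w j).symm)

end cobaseChange

end CobaseChange

section CellularSquares

variable {K : Type u} [Category.{v} K] [HasColimits K] {M : MorphismProperty K}

lemma isCellularSquare_iff_of_isPushout [M.RespectsIso] {A B C D P : K} {f : A ⟶ B} {g : A ⟶ C}
    {u : B ⟶ D} {v : C ⟶ D} {x : B ⟶ P} {y : C ⟶ P} (sq : IsPushout f g x y) {t : P ⟶ D}
    (hx : x ≫ t = u) (hy : y ≫ t = v) : IsCellularSquare M f g u v ↔ M t := by
  have w : f ≫ u = g ≫ v := by rw [← hx, ← hy, sq.w_assoc]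
  have desc_eq : pushout.desc u v w = sq.isoPushout.inv ≫ t := by
    apply pushout.hom_ext
    · rw [pushout.inl_desc, sq.inl_isoPushout_inv_assoc, hx]
    · rw [pushout.inr_desc, sq.inr_isoPushout_inv_assoc, hy]
  rw [← M.cancel_left_of_respectsIso sq.isoPushout.inv t, ← desc_eq]
  exact ⟨fun ⟨_, h⟩ => h, fun h => ⟨w, h⟩⟩

lemma IsCellularSquare.mem_of_isPushout [M.IsStableUnderCobaseChange] {A B C D X P Q : K}
    {f : A ⟶ B} {g : A ⟶ C} {u : B ⟶ D} {v : C ⟶ D} (h : IsCellularSquare M f g u v)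
    {a : B ⟶ X} {x : X ⟶ P} {p : C ⟶ P} {y : X ⟶ Q} {q : D ⟶ Q}
    (hP : IsPushout (f ≫ a) g x p) (hQ : IsPushout a u y q) {t : P ⟶ Q}
    (hx : x ≫ t = y) (hp : p ≫ t = v ≫ q) : M t := by
  obtain ⟨w, hM⟩ := h
  have corner := IsPushout.of_hasPushout f g
  have upper := IsPushout.of_left' hP corner
  have outer : IsPushout a (pushout.inl f g ≫ pushout.desc u v w) (x ≫ t) q := by
    rwa [pushout.inl_desc, hx]
  -- `P ⟶ Q` is the cobase change of `B ⊔_A C ⟶ D` along `B ⊔_A C ⟶ P`.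
  refine M.of_isPushout (outer.of_top (corner.hom_ext ?_ ?_) upper) hM
  · rw [pushout.inl_desc_assoc, corner.inl_desc_assoc, Category.assoc, hx, hQ.w]
  · rw [pushout.inr_desc_assoc, corner.inr_desc_assoc, hp]

lemma CellularHom.hom_mem [M.IsStableUnderComposition] [M.IsStableUnderCobaseChange]
    {X Y : Arrow K} {sq : X ⟶ Y} (h : CellularHom M sq) (hX : M X.hom) : M Y.hom := by
  obtain ⟨-, -, w, hM⟩ := h
  rw [← pushout.inl_desc _ _ w]
  exact M.comp_mem _ _ (M.of_isPushout (IsPushout.of_hasPushout sq.left X.hom) hX) hM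

lemma cobaseChange.map_mem [M.IsStableUnderCobaseChange] {J : Type*} [Category J] {F G : J ⥤ K}
    {φ : F ⟶ G} {i j : J} {h : i ⟶ j}
    (hsq : IsCellularSquare M (F.map h) (φ.app i) (φ.app j) (G.map h)) (a : Cocone F) :
    M ((cobaseChange φ a).map h) := by
  have source_isPushout : IsPushout (F.map h ≫ a.ι.app j) (φ.app i)
      ((inl φ a).app i) ((inr φ a).app i) := by
    rw [a.w]
    exact isPushout_app φ a i
  exact hsq.mem_of_isPushout source_isPushout (isPushout_app φ a j) (inl_app_map φ a h)
    ((inr φ a).naturality h).symm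

end CellularSquares

section Continuity

variable {K : Type u} [Category.{v} K] {M : MorphismProperty K} {κ : Cardinal.{v}}
  {I : Preord.{v}}

lemma IsCardinalDirected.isFiltered (hI : IsCardinalDirected κ I) (hκ : Cardinal.aleph0 ≤ κ) :
    IsFiltered I := by
  have upper_bound (S : Set I) (hS : S.Finite) : ∃ k, ∀ i ∈ S, i ≤ k :=
    hI S (hS.lt_aleph0.trans_le hκ)
  have : Nonempty I := (upper_bound ∅ Set.finite_empty).nonempty
  have : IsDirectedOrder I := ⟨fun i j => by
    simpa using upper_bound {i, j} (Set.toFinite _)⟩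
  infer_instance

variable (hcont : MContinuous M κ) (hI : IsCardinalDirected κ I)

section

variable {F : I ⥤ K} (hF : ∀ ⦃i j : I⦄ (h : i ⟶ j), M (F.map h)) {c : Cocone F} (hc : IsColimit c)

include hcont hI hF hc

lemma MContinuous.ι_app_mem (i : I) : M (c.ι.app i) :=
  (hcont I hI F ⟨fun _ => trivial, hF⟩ c hc).2.1 i

lemma MContinuous.mem_of_ι_app_comp_mem {Y : K} (m : c.pt ⟶ Y) (hm : ∀ i, M (c.ι.app i ≫ m)) :
    M m := by
  obtain ⟨m', hm', fac, -⟩ := (hcont I hI F ⟨fun _ => trivial, hF⟩ c hc).2.2 (c.extend m) trivial hm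
  rwa [hc.hom_ext fun i => (fac i).symm]

end

variable [HasColimits K] [IsConnected I] [M.IsStableUnderCobaseChange]

section

variable {F G : I ⥤ K} {φ : F ⟶ G}
  (hφ : ∀ ⦃i j : I⦄ (h : i ⟶ j), IsCellularSquare M (F.map h) (φ.app i) (φ.app j) (G.map h))
  {cF : Cocone F} {cG : Cocone G} (hF : IsColimit cF) (hG : IsColimit cG) {f : cF.pt ⟶ cG.pt}
  (hf : ∀ i, cF.ι.app i ≫ f = φ.app i ≫ cG.ι.app i)

include hcont hI hφ hF hG hf

lemma MContinuous.isCellularSquare_ι_app (i : I) :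
    IsCellularSquare M (cF.ι.app i) (φ.app i) f (cG.ι.app i) := by
  have isColimit : IsColimit (cobaseChange.cocone hf) :=
    cobaseChange.isColimitCocone hf hF hG IsPushout.of_id_fst hf
      (fun _ => Category.comp_id _) (fun _ => Category.comp_id _)
  refine (isCellularSquare_iff_of_isPushout (cobaseChange.isPushout_app φ cF i)
    (cobaseChange.inl_app_cocone_ι_app hf i) (cobaseChange.inr_app_cocone_ι_app hf i)).2 ?_
  exact hcont.ι_app_mem hI (fun _ _ h => cobaseChange.map_mem (hφ h) cF) isColimit i

lemma MContinuous.isCellularSquare_of_ι_app_comp {X Y : K} {s : cF.pt ⟶ X} {t : cG.pt ⟶ Y}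
    {g : X ⟶ Y}
    (hst : ∀ i, IsCellularSquare M (cF.ι.app i ≫ s) (φ.app i) g (cG.ι.app i ≫ t)) :
    IsCellularSquare M s f g t := by
  have w : s ≫ g = f ≫ t := hF.hom_ext fun i => by
    rw [reassoc_of% hf i, ← Category.assoc, (hst i).1]
  have comm (i : I) : (cF.extend s).ι.app i ≫ pushout.inl s f =
      φ.app i ≫ (cG.extend (pushout.inr s f)).ι.app i := by
    calc
      _ = cF.ι.app i ≫ s ≫ pushout.inl s f := Category.assoc _ _ _
      _ = φ.app i ≫ cG.ι.app i ≫ pushout.inr s f := by rw [pushout.condition, reassoc_of% hf i]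
  have isColimit : IsColimit (cobaseChange.cocone comm) :=
    cobaseChange.isColimitCocone (a := cF.extend s) (b := cG.extend (pushout.inr s f))
      comm hF hG (IsPushout.of_hasPushout s f) hf (fun _ => rfl) (fun _ => rfl)
  refine ⟨w, hcont.mem_of_ι_app_comp_mem hI (fun _ _ h => cobaseChange.map_mem (hφ h) _)
    isColimit _ fun i => ?_⟩
  refine (isCellularSquare_iff_of_isPushout (cobaseChange.isPushout_app φ _ i) ?_ ?_).1 (hst i)
  · calc
      _ = pushout.inl s f ≫ pushout.desc g t w :=
        (reassoc_of% (cobaseChange.inl_app_cocone_ι_app (a := cF.extend s) comm i)) _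
      _ = g := pushout.inl_desc _ _ _
  · calc
      _ = (cG.ι.app i ≫ pushout.inr s f) ≫ pushout.desc g t w :=
        (reassoc_of% (cobaseChange.inr_app_cocone_ι_app (a := cF.extend s) comm i)) _
      _ = cG.ι.app i ≫ t := by rw [Category.assoc, pushout.inr_desc]

end

variable {D : I ⥤ Arrow K} (hD : ∀ ⦃i j : I⦄ (h : i ⟶ j), CellularHom M (D.map h))
  {c : Cocone D} (hc : IsColimit c)

include hcont hI hD hc

lemma MContinuous.cellularHom_ι_app (i : I) : CellularHom M (c.ι.app i) := by
  have hA := isColimitOfPreserves Arrow.leftFunc hc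
  have hB := isColimitOfPreserves Arrow.rightFunc hc
  exact ⟨hcont.ι_app_mem hI (fun _ _ h => (hD h).1) hA i,
    hcont.ι_app_mem hI (fun _ _ h => (hD h).2.1) hB i,
    hcont.isCellularSquare_ι_app hI (φ := Functor.whiskerLeft D Arrow.leftToRight)
      (fun _ _ h => (hD h).2.2) hA hB (fun j => (c.ι.app j).w) i⟩

lemma MContinuous.cellularHom_of_ι_app_comp {Y : Arrow K} (s : c.pt ⟶ Y)
    (hs : ∀ i, CellularHom M (c.ι.app i ≫ s)) : CellularHom M s := by
  have hA := isColimitOfPreserves Arrow.leftFunc hc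
  have hB := isColimitOfPreserves Arrow.rightFunc hc
  exact ⟨hcont.mem_of_ι_app_comp_mem hI (fun _ _ h => (hD h).1) hA _ fun i => (hs i).1,
    hcont.mem_of_ι_app_comp_mem hI (fun _ _ h => (hD h).2.1) hB _ fun i => (hs i).2.1,
    hcont.isCellularSquare_of_ι_app_comp hI (φ := Functor.whiskerLeft D Arrow.leftToRight)
      (fun _ _ h => (hD h).2.2) hA hB (fun j => (c.ι.app j).w) fun i => (hs i).2.2⟩

end Continuity

theorem cellularSquares_continuous_general
    {K : Type u} [Category.{v} K] [HasColimits K] (M : MorphismProperty K)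
    [M.IsStableUnderComposition] [M.IsStableUnderCobaseChange]
    (κ : Cardinal.{v}) (hκ : Cardinal.aleph0 ≤ κ) (hcont : MContinuous M κ)
    (I : Preord.{v}) (hI : IsCardinalDirected κ I)
    (D : I ⥤ Arrow K) (hobj : ∀ i, M (D.obj i).hom)
    (hmap : ∀ (i j : I) (h : i ⟶ j), CellularHom M (D.map h))
    (c : Cocone D) (hc : IsColimit c) :
    M c.pt.hom ∧ (∀ i, CellularHom M (c.ι.app i)) ∧
      ∀ c' : Cocone D, (∀ i, CellularHom M (c'.ι.app i)) → CellularHom M (hc.desc c') := by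
  have := hI.isFiltered hκ
  have := IsFiltered.isConnected I
  obtain ⟨i⟩ := IsFiltered.nonempty (C := I)
  have hι := hcont.cellularHom_ι_app hI hmap hc
  refine ⟨(hι i).hom_mem (hobj i), hι, fun c' hc' => ?_⟩
  exact hcont.cellularHom_of_ι_app_comp hI hmap hc _ fun i => by rw [hc.fac]; exact hc' i

instance CellularCategory.isStableUnderComposition {K : Type u} [Category.{v} K] [HasColimits K]
    (M : MorphismProperty K) [CellularCategory K M] : M.IsStableUnderComposition :=
  ⟨fun f g => CellularCategory.comp_mem f g⟩

instance CellularCategory.isStableUnderCobaseChange {K : Type u} [Category.{v} K] [HasColimits K]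
    (M : MorphismProperty K) [CellularCategory K M] : M.IsStableUnderCobaseChange :=
  ⟨fun sq => CellularCategory.pushout_mem _ _ _ _ sq.flip⟩

/-- If `(K, M)` is a `λ`-continuous cellular category, then the independence
relation given by cellular squares is `λ`-continuous: for every `λ`-directed diagram in the
category `K_{M,↓}` (objects: morphisms of `M`; morphisms: cellular squares), its colimit
`f : A ⟶ B` in the arrow category lies in `M`, the colimit coprojection squares are cellular,
and the cocone is a colimit in `K_{M,↓}` (mediating morphisms to cellular cocones are
cellular squares). -/
theorem cellularSquares_continuous
    {K : Type u} [Category.{v} K] [HasColimits K] (M : MorphismProperty K)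
    [CellularCategory K M]
    (κ : Cardinal.{v}) (hκ : κ.IsRegular) (hcont : MContinuous M κ)
    (I : Preord.{v}) (hI : IsCardinalDirected κ I)
    (D : I ⥤ Arrow K) (hobj : ∀ i, M (D.obj i).hom)
    (hmap : ∀ (i j : I) (h : i ⟶ j), CellularHom M (D.map h))
    (c : Cocone D) (hc : IsColimit c) :
    M c.pt.hom ∧ (∀ i, CellularHom M (c.ι.app i)) ∧
      ∀ c' : Cocone D, M c'.pt.hom → (∀ i, CellularHom M (c'.ι.app i)) →
        CellularHom M (hc.desc c') := by
  obtain ⟨hpt, hι, hdesc⟩ :=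
    cellularSquares_continuous_general M κ hκ.aleph0_le hcont I hI D hobj hmap c hc
  exact ⟨hpt, hι, fun c' _ => hdesc c'⟩

end Paper
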